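/- For every integer m ≥ 3, the splitting field of f_m(X) over F_2 has exactly 2^{m+2} elements, i.e., the splitting field of f_m over F_2 is the finite field with 2^{m+2} elements. -/

import Mathlib

open Polynomial

/-- `fibSet m` is the set of fibbinary integers below `2^m`: integers in `{0,…,2^m-1}`
whose binary representation has no two consecutive ones. -/
noncomputable def fibSet (m : ℕ) : Finset ℕ :=
  @Finset.filter _ (fun i => ∀ j : ℕ, ¬(i.testBit j ∧ i.testBit (j + 1)))
    (Classical.decPred _) (Finset.range (2 ^ m))

/-- The `m`-th fibbinary polynomial over `F_2`. -/
noncomputable def fibPoly (m : ℕ) : Polynomial (ZMod 2) :=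
  ∑ i ∈ fibSet m, X ^ i


lemma mem_fibSet (m i : ℕ) : i ∈ fibSet m ↔
    i < 2 ^ m ∧ ∀ j : ℕ, ¬(i.testBit j = true ∧ i.testBit (j + 1) = true) := by
  simp [fibSet]

lemma fibSet_low (n i : ℕ) (hi : i < 2 ^ (n+1)) : i ∈ fibSet (n+2) ↔ i ∈ fibSet (n+1) := by
  rw [mem_fibSet, mem_fibSet]
  have : 2 ^ (n+2) = 2 * 2^(n+1) := by ring
  constructor
  · rintro ⟨_, h⟩; exact ⟨hi, h⟩
  · rintro ⟨_, h⟩; exact ⟨by omega, h⟩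

lemma fibSet_high (n i : ℕ) (hi : i < 2 ^ (n+1)) :
    2 ^ (n+1) + i ∈ fibSet (n+2) ↔ i ∈ fibSet n := by
  rw [mem_fibSet, mem_fibSet]
  have h2 : 2 ^ (n+2) = 2 * 2^(n+1) := by ring
  have hb : ∀ j, (2 ^ (n+1) + i).testBit j = if j = n + 1 then true else i.testBit j := by
    intro j
    split_ifs with h
    · subst h
      rw [Nat.testBit_two_pow_add_eq, Nat.testBit_lt_two_pow hi]; rfl
    · rcases lt_or_gt_of_ne h with h | h
      · exact Nat.testBit_two_pow_add_gt h i
      · rw [Nat.testBit_lt_two_pow, Nat.testBit_lt_two_pow]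
        · exact hi.trans (Nat.pow_lt_pow_right (by norm_num) h)
        · have : 2 ^ (n+2) ≤ 2 ^ j := Nat.pow_le_pow_right (by norm_num) h
          omega
  have hz : i.testBit (n+1) = false := Nat.testBit_lt_two_pow hi
  constructor
  · rintro ⟨_, h⟩
    have hn : i.testBit n = false := by
      have := h n
      rw [hb, hb] at this
      simpa using this
    refine ⟨?_, ?_⟩
    · apply Nat.lt_pow_two_of_testBit
      intro j hj
      rcases Nat.lt_or_ge n j with h' | h'
      · exact Nat.testBit_lt_two_pow (hi.trans_le (Nat.pow_le_pow_right (by norm_num) h'))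
      · have : j = n := le_antisymm h' hj
        rw [this, hn]
    · intro j hj
      apply h j
      rw [hb, hb]
      split_ifs <;> simp [hj]
  · rintro ⟨hlt, h⟩
    refine ⟨by omega, ?_⟩
    have hn : i.testBit n = false := Nat.testBit_lt_two_pow hlt
    intro j
    have hz2 : i.testBit (n+1+1) = false :=
      Nat.testBit_lt_two_pow (hi.trans (Nat.pow_lt_pow_right (by norm_num) (by omega)))
    rw [hb, hb]
    by_cases h1 : j = n + 1
    · subst h1; simp [hz2]
    · by_cases h3 : j = n
      · subst h3; simp [hn]
      · have := h j
        simpa [h1, h3] using this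

lemma fibPoly_rec (n : ℕ) :
    fibPoly (n+2) = fibPoly (n+1) + X ^ (2^(n+1)) * fibPoly n := by
  have hs : fibSet (n+2) = fibSet (n+1) ∪ (fibSet n).image (fun i => 2^(n+1) + i) := by
    ext k
    rw [Finset.mem_union, Finset.mem_image]
    have h2 : 2 ^ (n+2) = 2 * 2^(n+1) := by ring
    have h3 : 2 ^ (n+1) = 2 * 2^n := by ring
    rcases Nat.lt_or_ge k (2^(n+1)) with hk | hk
    · rw [fibSet_low n k hk]
      constructor
      · exact Or.inl
      · rintro (h | ⟨a, _, rfl⟩)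
        · exact h
        · omega
    · obtain ⟨i, rfl⟩ := Nat.exists_eq_add_of_le hk
      constructor
      · intro h
        have := ((mem_fibSet _ _).1 h).1
        exact Or.inr ⟨i, (fibSet_high n i (by omega)).1 h, rfl⟩
      · rintro (h | ⟨a, ha, hai⟩)
        · have := ((mem_fibSet _ _).1 h).1
          omega
        · have : a = i := by simpa using hai
          subst this
          have := ((mem_fibSet _ _).1 ha).1
          exact (fibSet_high n a (by omega)).2 ha
  unfold fibPoly
  rw [hs, Finset.sum_union, Finset.sum_image, Finset.mul_sum]
  · simp [pow_add]
  · intro a _ b _ h; simpa using h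
  · rw [Finset.disjoint_left]
    intro a ha hb
    have := ((mem_fibSet _ _).1 ha).1
    obtain ⟨c, _, rfl⟩ := Finset.mem_image.1 hb
    omega

lemma fibPoly_zero : fibPoly 0 = 1 := by
  have : fibSet 0 = {0} := by
    ext i
    rw [mem_fibSet]
    constructor
    · rintro ⟨h, _⟩; simpa using h
    · intro h; simp at h; subst h; simp
  simp [fibPoly, this]

lemma fibPoly_one : fibPoly 1 = 1 + X := by
  have : fibSet 1 = {0, 1} := by
    ext i
    rw [mem_fibSet]
    constructor
    · rintro ⟨h, _⟩; simp; omega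
    · intro h
      simp at h
      rcases h with rfl | rfl <;> simp [Nat.testBit_succ]
  simp [fibPoly, this]

lemma two_zero : (2 : (ZMod 2)[X]) = 0 := CharTwo.two_eq_zero

lemma fibPoly_rec2 (n : ℕ) :
    fibPoly (n+2) = fibPoly (n+1) ^ 2 + X * fibPoly n ^ 4 := by
  induction n using Nat.strong_induction_on with
  | _ n ih =>
    match n, ih with
    | 0, _ =>
      rw [fibPoly_rec]
      simp only [zero_add, fibPoly_zero, fibPoly_one]
      linear_combination (-X) * two_zero
    | 1, _ =>
      rw [fibPoly_rec, fibPoly_rec]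
      simp only [zero_add, fibPoly_zero, fibPoly_one]
      norm_num
      linear_combination (-X-3*X^2-4*X^3-2*X^4) * two_zero
    | n+2, ih =>
      have h1 := ih (n+1) (by omega)
      have h0 := ih n (by omega)
      have e1 := fibPoly_rec n
      have e2 := fibPoly_rec (n+1)
      have e3 := fibPoly_rec (n+2)
      simp only [show n+1+2 = n+3 by ring, show n+2+2=n+4 by ring, show n+1+1=n+2 by ring,
        show n+2+1=n+3 by ring] at *
      have p1 : (X : (ZMod 2)[X]) ^ 2^(n+2) = (X^2^(n+1))^2 := by ring
      have p2 : (X : (ZMod 2)[X]) ^ 2^(n+3) = (X^2^(n+1))^4 := by ring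
      rw [p1] at e2
      rw [p2] at e3
      set q : (ZMod 2)[X] := X^2^(n+1)
      set a := fibPoly n
      set b := fibPoly (n+1)
      set c := fibPoly (n+2)
      set d := fibPoly (n+3)
      have s1 : d^2 = c^2 + q^4*b^2 := by
        rw [e2, CharTwo.add_sq]; ring
      have s2 : c^4 = b^4 + q^4*a^4 := by
        have : c^2 = b^2 + q^2*a^2 := by rw [e1, CharTwo.add_sq]; ring
        rw [show c^4 = (c^2)^2 by ring, this, CharTwo.add_sq]; ring
      rw [e3, s1]
      linear_combination h1 + q^4 * h0 - X * s2

section field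
variable {K : Type*} [Field K] [Algebra (ZMod 2) K]

lemma coeff_fib (m k : ℕ) (h : k ∈ fibSet m) : (fibPoly m).coeff k = 1 := by
  simp [fibPoly, coeff_X_pow, h]

lemma fib_root_ne_zero (m : ℕ) (x : K) (h : aeval x (fibPoly m) = 0) : x ≠ 0 := by
  rintro rfl
  rw [← coeff_zero_eq_aeval_zero', coeff_fib] at h
  · simp at h
  · rw [mem_fibSet]; simp

lemma fib_consec (m : ℕ) (x : K) (hx : x ≠ 0) (h : aeval x (fibPoly m) = 0)
    (h' : aeval x (fibPoly (m+1)) = 0) : False := by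
  induction m with
  | zero => simp [fibPoly_zero] at h
  | succ n ih =>
    refine ih ?_ h
    have := congrArg (aeval x) (fibPoly_rec2 n)
    simp only [map_add, map_mul, map_pow, aeval_X] at this
    rw [h', h] at this
    simpa [hx] using this

lemma fib_sep (n : ℕ) : (fibPoly (n+2)).Separable := by
  have hd : derivative (fibPoly (n+2)) = fibPoly n ^ 4 := by
    rw [fibPoly_rec2]
    simp only [derivative_add, derivative_mul, derivative_pow, derivative_X]
    have : (C ((2:ℕ) : ZMod 2)) = 0 := by
      rw [show ((2:ℕ) : ZMod 2) = 0 from rfl, C_0]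
    have h4 : (C ((4:ℕ) : ZMod 2)) = 0 := by
      rw [show ((4:ℕ) : ZMod 2) = 0 from rfl, C_0]
    rw [this, h4]; ring
  rw [separable_def, hd]
  apply IsCoprime.pow_right
  rw [← isCoprime_map (algebraMap (ZMod 2) (AlgebraicClosure (ZMod 2)))]
  by_contra hc
  obtain ⟨x, h1, h2⟩ : ∃ x : AlgebraicClosure (ZMod 2), aeval x (fibPoly (n+2)) = 0 ∧
      aeval x (fibPoly n) = 0 := by
    by_contra hne
    push Not at hne
    apply hc
    rw [isCoprime_map, isCoprime_iff_aeval_ne_zero_of_isAlgClosed _ (AlgebraicClosure (ZMod 2))]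
    intro x
    by_cases h : aeval x (fibPoly (n+2)) = 0
    · exact Or.inr (hne x h)
    · exact Or.inl h
  have hx := fib_root_ne_zero _ x h1
  have := congrArg (aeval x) (fibPoly_rec2 n)
  simp only [map_add, map_mul, map_pow, aeval_X] at this
  rw [h1, h2] at this
  exact fib_consec n x hx h2 (by simpa using this.symm)

lemma fib_root_pow (n : ℕ) (x : K) (h : aeval x (fibPoly (n+2)) = 0) : x ^ 2^(n+4) = x := by
  have hx := fib_root_ne_zero _ x h
  have e1 := congrArg (aeval x) (fibPoly_rec n)
  have e2 := congrArg (aeval x) (fibPoly_rec2 n)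
  have e3 := congrArg (aeval x) (fibPoly_rec (n+1))
  have e4 := congrArg (aeval x) (fibPoly_rec2 (n+1))
  have ha : aeval x (fibPoly (n+1)) ≠ 0 := fun h' => fib_consec _ x hx h' h
  have : CharP K 2 := charP_of_injective_algebraMap (algebraMap (ZMod 2) K).injective 2
  have t : (2:K) = 0 := CharTwo.two_eq_zero
  rw [e3] at e4
  simp only [map_add, map_mul, map_pow, aeval_X] at e1 e2 e4
  rw [show n+1+1=n+2 by ring] at e4
  rw [h] at e1 e2 e4
  rw [show x^2^(n+2) = (x^2^(n+1))^2 by ring] at e4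
  rw [show x^2^(n+4) = (x^2^(n+1))^8 by ring]
  set q := x^2^(n+1)
  set a := aeval x (fibPoly (n+1))
  set c := aeval x (fibPoly n)
  have e1 : a = q * c := by linear_combination -e1 - q * c * t
  have e2 : a^2 = x * c^4 := by linear_combination -e2 - x * c^4 * t
  have e4 : q^2 = x * a^3 := by
    apply mul_right_cancel₀ ha
    linear_combination e4
  have e5 : x * a^2 = q^4 := by
    apply mul_right_cancel₀ (pow_ne_zero 2 ha)
    calc x * a^2 * a^2 = x * (q*c)^4 := by rw [← e1]; ring
      _ = q^4 * (x * c^4) := by ring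
      _ = _ := by rw [e2]
  have e6 : x * a^4 = 1 := by
    apply mul_left_cancel₀ (mul_ne_zero hx (pow_ne_zero 2 ha))
    calc x * a^2 * (x * a^4) = (x*a^3)^2 := by ring
      _ = x * a^2 * 1 := by rw [← e4, mul_one, e5]; ring
  calc q^8 = (q^4)^2 := by ring
    _ = x * (x * a^4) := by rw [← e5]; ring
    _ = x := by rw [e6, mul_one]

lemma card_le_of_pow (k : ℕ) (hk : 1 < k) (h : ∀ x : K, x ^ k = x) : Nat.card K ≤ k := by
  classical
  have hne := FiniteField.X_pow_card_sub_X_ne_zero K hk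
  have hdeg := FiniteField.X_pow_card_sub_X_natDegree_eq K hk
  have hsub : (Set.univ : Set K) ⊆ ((X^k - X : K[X]).roots.toFinset : Set K) := by
    intro x _
    simp [mem_roots hne, h x]
  have h1 := Set.ncard_le_ncard hsub (Finset.finite_toSet _)
  rw [Set.ncard_univ, Set.ncard_coe_finset] at h1
  calc _ ≤ _ := h1
    _ ≤ _ := Multiset.toFinset_card_le _
    _ ≤ _ := card_roots' _
    _ = k := hdeg
end field

theorem card_splittingField_fibPoly (m : ℕ) (hm : 3 ≤ m) :
    Nat.card (fibPoly m).SplittingField = 2 ^ (m + 2) := by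
  obtain ⟨n, rfl⟩ := Nat.exists_eq_add_of_le' (show 2 ≤ m by omega)
  set K := (fibPoly (n+2)).SplittingField with hK
  have : Finite K := Module.finite_of_finite (ZMod 2)
  have : CharP K 2 := charP_of_injective_algebraMap (algebraMap (ZMod 2) K).injective 2
  have hcard : Nat.card K = 2 ^ Module.finrank (ZMod 2) K := by
    rw [Module.natCard_eq_pow_finrank (K := ZMod 2)]; simp
  set d := Module.finrank (ZMod 2) K
  have hall : ∀ x : K, x ^ 2^(n+4) = x := by
    let φ : K →ₐ[ZMod 2] K := (FiniteField.frobeniusAlgHom (ZMod 2) K)^(n+4)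
    have hφ : ∀ x, φ x = x ^ 2^(n+4) := by
      have key : ∀ k : ℕ, ∀ x : K, ((FiniteField.frobeniusAlgHom (ZMod 2) K)^k) x = x ^ 2^k := by
        intro k
        induction k with
        | zero => intro x; simp
        | succ k ih =>
          intro x
          rw [pow_succ, AlgHom.mul_apply, ih, pow_succ' 2 k, pow_mul]
          simp
      exact key _
    have : φ = AlgHom.id _ _ := by
      apply AlgHom.ext_of_adjoin_eq_top (SplittingField.adjoin_rootSet (fibPoly (n+2)))
      intro x hx
      rw [hφ]
      exact fib_root_pow n x (aeval_eq_zero_of_mem_rootSet hx)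
    intro x
    rw [← hφ, this]; rfl
  have hle : 2 ^ d ≤ 2^(n+4) := by
    rw [← hcard]; exact card_le_of_pow _ (Nat.one_lt_two_pow (by omega)) hall
  have hlt : 2^(n+1) < 2^d := by
    rw [← hcard]
    have h1 : ((fibPoly (n+2)).rootSet K).ncard = (fibPoly (n+2)).natDegree := by
      rw [← Nat.card_coe_set_eq, Nat.card_eq_fintype_card]
      exact card_rootSet_eq_natDegree (fib_sep n) (SplittingField.splits (fibPoly (n+2)))
    have h2 : 2^(n+1) ≤ (fibPoly (n+2)).natDegree := by
      apply le_natDegree_of_ne_zero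
      rw [coeff_fib]
      · simp
      · rw [mem_fibSet]
        refine ⟨Nat.pow_lt_pow_right (by norm_num) (by omega), ?_⟩
        intro j
        simp only [Nat.testBit_two_pow, decide_eq_true_eq]
        omega
    have h3 : ((fibPoly (n+2)).rootSet K).ncard < Nat.card K := by
      apply Set.ncard_lt_card
      intro h
      have : (0:K) ∈ (fibPoly (n+2)).rootSet K := by rw [h]; trivial
      exact fib_root_ne_zero _ _ (aeval_eq_zero_of_mem_rootSet this) rfl
    exact h2.trans_lt (h1 ▸ h3)
  have hd1 := (Nat.pow_le_pow_iff_right (by norm_num : 1 < 2)).1 hle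
  have hd2 := (Nat.pow_lt_pow_iff_right (by norm_num : 1 < 2)).1 hlt
  rw [hcard]
  by_contra hne
  have hdne : d ≠ n + 4 := fun h => hne (by rw [h])
  obtain ⟨e, he⟩ := Nat.exists_eq_add_of_le hd1
  have hsm : ∀ x : K, x ^ 2^e = x := by
    intro x
    have hx : x ^ 2^d = x := by
      rw [← hcard]
      have := Fintype.ofFinite K
      rw [Nat.card_eq_fintype_card]; exact FiniteField.pow_card x
    conv_rhs => rw [← hall x, he, pow_add, pow_mul, hx]
  have h5 := card_le_of_pow _ (Nat.one_lt_two_pow (by omega)) hsm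
  rw [hcard] at h5
  have := (Nat.pow_le_pow_iff_right (by norm_num : 1 < 2)).1 h5
  omega
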